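/- arXiv:2311.08963 — 2 statements merged into one kernel-verified Lean document; each statement's English description precedes it below -/
import Mathlib

section
/- Let (Ω, μ) be a probability space on a standard Borel space, Y₀, Y₁ : Ω → ℝ measurable with |Y₀| ≤ M and |Y₁| ≤ M almost surely for some M > 0, and D, T : Ω → {0,1} measurable with (Y₀, Y₁) conditionally independent of D given the σ-algebra generated by T. Let Y := Y₁·1{D = 1} + Y₀·1{D = 0}, and suppose there is κ ∈ (0, 1/2) with κ ≤ p(t) ≤ 1 − κ for t ∈ {0,1}, where p(t) := μ(D = 1, T = t)/μ(T = t) (taking μ(T = t) > 0). Set β_t := E[(Y₁ − Y₀)·1{T = t}] and c := E[Y₀], and define W : [0,1]² → ℝ by W(x,y) = β₁x + β₀y + c if x > y; W(x,y) = (β₁+β₀)x + c if x = y; W(x,y) = β₁y + β₀x + c if x < y. For a sample of size n, on the product space (Ωⁿ, μ^⊗n) define for each t ∈ {0,1} the estimator β̂_t := (1/n)·Σ_{i=1}^n [ Y⁽ⁱ⁾·1{D⁽ⁱ⁾ = 1, T⁽ⁱ⁾ = t}/p(t) − Y⁽ⁱ⁾·1{D⁽ⁱ⁾ = 0, T⁽ⁱ⁾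 = t}/(1 − p(t)) ], where (Y⁽ⁱ⁾, D⁽ⁱ⁾, T⁽ⁱ⁾) are the i-th coordinate copies, and let δ̂ := d(β̂₁, β̂₀) where d(b₁, b₀) = (1,0) if b₁ > 0 and b₀ < 0; (1,1) if (b₁ ≤ 0 or b₀ ≥ 0) and b₁ + b₀ > 0; (0,0) otherwise. Then for n ≥ κ^{−2}: E_{μ^⊗n}[ max_{(x,y) ∈ [0,1]²} W(x,y) − W(δ̂) ] ≤ 2·e^{−1/2}·M/(κ·√n). -/
open MeasureTheory ProbabilityTheory

lemma measureReal_inter_fiber_eq_mul {Ω γ : Type*} {mΩ : MeasurableSpace Ω} {mγ : MeasurableSpace γ}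
    [MeasurableSingletonClass γ] {μ : Measure Ω} [IsFiniteMeasure μ] {k : Ω → γ}
    (hk : Measurable k) {s : Set Ω} (hs : MeasurableSet s) {a : γ → ℝ}
    (ha : μ⟦s | mγ.comap k⟧ = a ∘ k) (t : γ) :
    μ.real (s ∩ k ⁻¹' {t}) = a t * μ.real (k ⁻¹' {t}) := by
  have hkt : MeasurableSet (k ⁻¹' {t}) := hk (measurableSet_singleton t)
  have h := setIntegral_condExp (μ := μ) hk.comap_le (f := s.indicator fun _ => (1 : ℝ))
    ((integrable_const 1).indicator hs) (s := k ⁻¹' {t}) ⟨{t}, measurableSet_singleton t, rfl⟩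
  rw [ha, setIntegral_congr_fun (g := fun _ => a t) hkt
    (fun ω hω => by simp only [Function.comp_apply]; rw [show k ω = t from hω]),
    integral_indicator_const _ hs] at h
  simp only [setIntegral_const, smul_eq_mul, mul_one, measureReal_restrict_apply hs] at h
  rw [← h, mul_comm]

/-- Conditional independence given `k` is independence conditionally on each non-null fiber of `k`. -/
lemma indepFun_cond_fiber_of_condIndepFun {Ω β β' γ : Type*} {mΩ : MeasurableSpace Ω}
    [StandardBorelSpace Ω] {mβ : MeasurableSpace β} {mβ' : MeasurableSpace β'}
    {mγ : MeasurableSpace γ} [MeasurableSingletonClass γ] {μ : Measure Ω} [IsFiniteMeasure μ]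
    {f : Ω → β} {g : Ω → β'} {k : Ω → γ} (hf : Measurable f) (hg : Measurable g)
    (hk : Measurable k) (h : CondIndepFun (mγ.comap k) hk.comap_le f g μ) {t : γ}
    (ht : μ (k ⁻¹' {t}) ≠ 0) :
    IndepFun f g μ[|k ⁻¹' {t}] := by
  have hkt : MeasurableSet (k ⁻¹' {t}) := hk (measurableSet_singleton t)
  rw [condIndepFun_iff_condExp_inter_preimage_eq_mul hf hg] at h
  rw [indepFun_iff_measure_inter_preimage_eq_mul]
  intro s u hs hu
  have factor (v : Set Ω) : ∃ a : γ → ℝ, μ⟦v | mγ.comap k⟧ = a ∘ k := by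
    obtain ⟨a, -, ha⟩ := (stronglyMeasurable_condExp
      (f := v.indicator fun _ => (1 : ℝ)) (μ := μ) (m := mγ.comap k)).exists_eq_measurable_comp
    exact ⟨a, ha⟩
  obtain ⟨a, ha⟩ := factor (f ⁻¹' s)
  obtain ⟨b, hb⟩ := factor (g ⁻¹' u)
  obtain ⟨e, he⟩ := factor (f ⁻¹' s ∩ g ⁻¹' u)
  have h1 := measureReal_inter_fiber_eq_mul hk (hf hs) ha t
  have h2 := measureReal_inter_fiber_eq_mul hk (hg hu) hb t
  have h3 := measureReal_inter_fiber_eq_mul hk ((hf hs).inter (hg hu)) he t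
  have heq : e t = a t * b t := by
    have hae := h s u hs hu
    rw [ha, hb, he] at hae
    obtain ⟨ω, hω, hωt⟩ : ∃ ω, (e ∘ k) ω = (a ∘ k) ω * (b ∘ k) ω ∧ ω ∈ k ⁻¹' {t} := by
      by_contra! hcon
      exact ht (measure_mono_null (fun ω hω hω' => hcon ω hω' hω) hae)
    have hkω : k ω = t := hωt
    simpa [hkω] using hω
  have hpos : μ.real (k ⁻¹' {t}) ≠ 0 := by simp [measureReal_eq_zero_iff, ht]
  rw [← ENNReal.toReal_eq_toReal_iff' (measure_ne_top _ _) (by finiteness), ENNReal.toReal_mul]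
  simp only [cond_apply hkt, ENNReal.toReal_mul, ENNReal.toReal_inv, ← measureReal_def,
    Set.inter_comm (k ⁻¹' {t}), h1, h2, h3, heq]
  field_simp

/-- If `Z` is bounded by `B` and has mean `-Δ ≤ 0`, Hoeffding's inequality bounds `Δ` times the
probability that a sample sum of `Z` is nonnegative, uniformly in `Δ`. -/
lemma mul_measureReal_sum_nonneg_le {Ω : Type*} [MeasurableSpace Ω] {μ : Measure Ω}
    [IsProbabilityMeasure μ] {Z : Ω → ℝ} (hZ : Measurable Z) {B : ℝ} (hB : 0 < B)
    (hZB : ∀ᵐ ω ∂μ, |Z ω| ≤ B) (hmean : ∫ ω, Z ω ∂μ ≤ 0) {n : ℕ} (hn : 0 < n) :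
    -(∫ ω, Z ω ∂μ) * (Measure.pi fun _ : Fin n => μ).real {ω | 0 ≤ ∑ i, Z (ω i)}
      ≤ Real.exp (-(1 / 2)) * B / Real.sqrt n := by
  set m := ∫ ω, Z ω ∂μ with hm
  have hsub := hasSubgaussianMGF_of_mem_Icc (μ := μ) (a := -B) (b := B) hZ.aemeasurable
    (hZB.mono fun ω hω => abs_le.mp hω)
  have hn' : (0 : ℝ) < n := by exact_mod_cast hn
  have hcoord (i : Fin n) : HasSubgaussianMGF (fun ω : Fin n → Ω => Z (ω i) - m)
      ((‖B - -B‖₊ / 2) ^ 2) (Measure.pi fun _ => μ) := by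
    refine HasSubgaussianMGF.of_map (Y := fun ω : Fin n → Ω => ω i) (X := fun ω => Z ω - m)
      (measurable_pi_apply i).aemeasurable ?_
    rw [(measurePreserving_eval (fun _ : Fin n => μ) i).map_eq]
    exact hsub
  have hind : iIndepFun (fun (i : Fin n) (ω : Fin n → Ω) => Z (ω i) - m)
      (Measure.pi fun _ => μ) :=
    iIndepFun_pi (X := fun _ ω => Z ω - m) fun _ => by fun_prop
  have htail := HasSubgaussianMGF.measure_sum_ge_le_of_iIndepFun hind (s := Finset.univ)
    (fun i _ => hcoord i) (ε := n * -m) (by nlinarith)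
  have hset : {ω : Fin n → Ω | n * -m ≤ ∑ i, (Z (ω i) - m)} = {ω | 0 ≤ ∑ i, Z (ω i)} := by
    ext ω
    simp [Finset.sum_sub_distrib]
  have hexp : -(n * -m) ^ 2 / (2 * ((∑ _i : Fin n, (‖B - -B‖₊ / 2) ^ 2 : NNReal) : ℝ))
      = -((m * Real.sqrt n / B) ^ 2 / 2) := by
    have hnorm : ((‖B - -B‖₊ : NNReal) : ℝ) = 2 * B := by
      rw [coe_nnnorm, Real.norm_of_nonneg (by linarith)]; ring
    simp only [Finset.sum_const, Finset.card_univ, Fintype.card_fin, nsmul_eq_mul, NNReal.coe_mul,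
      NNReal.coe_natCast, NNReal.coe_pow, NNReal.coe_div, hnorm, NNReal.coe_ofNat,
      div_pow, mul_pow, Real.sq_sqrt hn'.le]
    field_simp
  rw [hset, hexp] at htail
  -- `s * exp (-s ^ 2 / 2)` is largest at `s = 1`
  have hopt (s : ℝ) : s * Real.exp (-(s ^ 2 / 2)) ≤ Real.exp (-(1 / 2)) := by
    have h1 : s ≤ Real.exp ((s ^ 2 - 1) / 2) := by
      nlinarith [Real.add_one_le_exp ((s ^ 2 - 1) / 2), sq_nonneg (s - 1)]
    calc s * Real.exp (-(s ^ 2 / 2))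
        ≤ Real.exp ((s ^ 2 - 1) / 2) * Real.exp (-(s ^ 2 / 2)) := by gcongr
      _ = Real.exp (-(1 / 2)) := by rw [← Real.exp_add]; ring_nf
  have hsq : 0 < Real.sqrt n := Real.sqrt_pos.mpr hn'
  calc -m * (Measure.pi fun _ : Fin n => μ).real {ω | 0 ≤ ∑ i, Z (ω i)}
      ≤ -m * Real.exp (-((m * Real.sqrt n / B) ^ 2 / 2)) := by
        gcongr; linarith
    _ = (-m * Real.sqrt n / B) * Real.exp (-((-m * Real.sqrt n / B) ^ 2 / 2))
          * (B / Real.sqrt n) := by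
        rw [show (-m * Real.sqrt n / B) ^ 2 = (m * Real.sqrt n / B) ^ 2 by ring]
        field_simp
    _ ≤ Real.exp (-(1 / 2)) * (B / Real.sqrt n) := by
        gcongr; exact hopt _
    _ = _ := by ring

/-- Expected regret of choosing the alternative with the largest sample mean. -/
lemma integral_empirical_argmax_regret_le {Ω ι : Type*} [MeasurableSpace Ω] [Fintype ι]
    {μ : Measure Ω} [IsProbabilityMeasure μ] {H : ι → Ω → ℝ}
    (hH : ∀ j, Measurable (H j)) (hint : ∀ j, Integrable (H j) μ) {B : ℝ} (hB : 0 < B)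
    (hHB : ∀ j k, ∀ᵐ ω ∂μ, |H j ω - H k ω| ≤ B) {n : ℕ} (hn : 0 < n)
    {sel : (Fin n → Ω) → ι} (hsel : ∀ ω j, ∑ i, H j (ω i) ≤ ∑ i, H (sel ω) (ω i))
    {best : ι} (hbest : ∀ j, ∫ ω, H j ω ∂μ ≤ ∫ ω, H best ω ∂μ) :
    ∫ ω, ((∫ x, H best x ∂μ) - ∫ x, H (sel ω) x ∂μ) ∂(Measure.pi fun _ : Fin n => μ)
      ≤ ((Fintype.card ι : ℝ) - 1) * (Real.exp (-(1 / 2)) * B / Real.sqrt n) := by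
  classical
  set G : ι → ℝ := fun j => ∫ x, H j x ∂μ with hG
  let A : ι → Set (Fin n → Ω) := fun j => {ω | 0 ≤ ∑ i, (H j (ω i) - H best (ω i))}
  have hA (j) : MeasurableSet (A j) := by
    refine measurableSet_le measurable_const (Finset.measurable_sum _ fun i _ => ?_)
    exact ((hH j).comp (measurable_pi_apply i)).sub ((hH best).comp (measurable_pi_apply i))
  have hintA (j) : Integrable ((A j).indicator fun _ => G best - G j)
      (Measure.pi fun _ : Fin n => μ) := (integrable_const _).indicator (hA j)
  have hpoint (ω : Fin n → Ω) : G best - G (sel ω)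
      ≤ ∑ j ∈ Finset.univ.erase best, (A j).indicator (fun _ => G best - G j) ω := by
    have hnn (j) : 0 ≤ (A j).indicator (fun _ => G best - G j) ω :=
      Set.indicator_nonneg (fun _ _ => sub_nonneg.mpr (hbest j)) ω
    by_cases hs : sel ω = best
    · rw [hs, sub_self]
      exact Finset.sum_nonneg fun j _ => hnn j
    · have hmem : ω ∈ A (sel ω) := by
        simpa [A, Finset.sum_sub_distrib] using hsel ω best
      refine le_trans ?_ (Finset.single_le_sum (fun j _ => hnn j)
        (Finset.mem_erase.mpr ⟨hs, Finset.mem_univ _⟩))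
      rw [Set.indicator_of_mem hmem]
  calc ∫ ω, (G best - G (sel ω)) ∂(Measure.pi fun _ : Fin n => μ)
      ≤ ∫ ω, ∑ j ∈ Finset.univ.erase best, (A j).indicator (fun _ => G best - G j) ω
          ∂(Measure.pi fun _ : Fin n => μ) :=
        integral_mono_of_nonneg (.of_forall fun ω => sub_nonneg.mpr (hbest _))
          (integrable_finsetSum _ fun j _ => hintA j) (.of_forall hpoint)
    _ = ∑ j ∈ Finset.univ.erase best,
          (G best - G j) * (Measure.pi fun _ : Fin n => μ).real (A j) := by
        rw [integral_finsetSum _ fun j _ => hintA j]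
        refine Finset.sum_congr rfl fun j _ => ?_
        rw [integral_indicator_const _ (hA j), smul_eq_mul, mul_comm]
    _ ≤ ∑ j ∈ Finset.univ.erase best, Real.exp (-(1 / 2)) * B / Real.sqrt n := by
        refine Finset.sum_le_sum fun j _ => ?_
        have hmean : ∫ ω, (H j ω - H best ω) ∂μ = G j - G best :=
          integral_sub (hint j) (hint best)
        have := mul_measureReal_sum_nonneg_le ((hH j).sub (hH best)) hB (hHB j best)
          (hmean.trans_le (sub_nonpos.mpr (hbest j))) hn
        simp only [Pi.sub_apply] at this
        rwa [hmean, neg_sub] at this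
    _ = _ := by
        rw [Finset.sum_const, Finset.card_erase_of_mem (Finset.mem_univ _), Finset.card_univ,
          nsmul_eq_mul, Nat.cast_sub (Fintype.card_pos_iff.mpr ⟨best⟩), Nat.cast_one]

lemma integral_mul_ite_fiber {Ω γ : Type*} [MeasurableSpace Ω] [DecidableEq γ]
    [MeasurableSpace γ] [MeasurableSingletonClass γ] {μ : Measure Ω} [IsFiniteMeasure μ]
    {k : Ω → γ} (hk : Measurable k) (t : γ) (F : Ω → ℝ) :
    ∫ ω, F ω * (if k ω = t then 1 else 0) ∂μ
      = μ.real (k ⁻¹' {t}) * ∫ ω, F ω ∂μ[|k ⁻¹' {t}] := by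
  have hkt : MeasurableSet (k ⁻¹' {t}) := hk (measurableSet_singleton t)
  have hind : (fun ω => F ω * (if k ω = t then 1 else 0)) = (k ⁻¹' {t}).indicator F := by
    ext ω
    by_cases h : k ω = t <;> simp [Set.indicator, h]
  rw [hind, integral_indicator hkt, ProbabilityTheory.cond, integral_smul_measure,
    ENNReal.toReal_inv, smul_eq_mul,
    ← measureReal_def]
  by_cases h0 : μ.real (k ⁻¹' {t}) = 0
  · rw [h0, zero_mul]
    rw [measureReal_eq_zero_iff] at h0
    rw [Measure.restrict_eq_zero.mpr h0, integral_zero_measure]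
  · rw [mul_inv_cancel_left₀ h0]

/-- If `F` and `D` are independent conditionally on `k = t`, the expectation of `F` on
`{D = j, k = t}` is its expectation on `{k = t}` scaled by the propensity of `D = j`. -/
lemma integral_mul_ite_and_fiber {Ω γ δ : Type*} [MeasurableSpace Ω] [DecidableEq γ]
    [MeasurableSpace γ] [MeasurableSingletonClass γ] [DecidableEq δ]
    [MeasurableSpace δ] [MeasurableSingletonClass δ] {μ : Measure Ω} [IsFiniteMeasure μ]
    {D : Ω → δ} {k : Ω → γ} (hD : Measurable D) (hk : Measurable k) {F : Ω → ℝ}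
    (hF : Measurable F) (j : δ) (t : γ) (hFD : IndepFun F D μ[|k ⁻¹' {t}]) :
    ∫ ω, F ω * (if D ω = j ∧ k ω = t then 1 else 0) ∂μ
      = μ[|k ⁻¹' {t}].real (D ⁻¹' {j}) * ∫ ω, F ω * (if k ω = t then 1 else 0) ∂μ := by
  have hDj : MeasurableSet (D ⁻¹' {j}) := hD (measurableSet_singleton j)
  have hite : Measurable fun x : δ => if x = j then (1 : ℝ) else 0 :=
    Measurable.ite (measurableSet_singleton j) measurable_const measurable_const
  have hsplit : (fun ω => F ω * (if D ω = j ∧ k ω = t then (1 : ℝ) else 0))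
      = fun ω => (F ω * (if D ω = j then 1 else 0)) * (if k ω = t then 1 else 0) := by
    ext ω
    by_cases h : D ω = j <;> simp [h]
  have hind : (fun ω => if D ω = j then (1 : ℝ) else 0) = (D ⁻¹' {j}).indicator fun _ => 1 := by
    ext ω
    simp [Set.indicator]
  have hmul := (hFD.comp measurable_id hite).integral_fun_mul_eq_mul_integral
    hF.aestronglyMeasurable (hite.comp hD).aestronglyMeasurable
  simp only [Function.comp_def, id] at hmul
  rw [hsplit, integral_mul_ite_fiber hk, integral_mul_ite_fiber hk, hmul, hind,
    integral_indicator_const _ hDj]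
  simp only [smul_eq_mul, mul_one]
  ring

/-- Proposition 2: Finite-sample maximum-regret bound for the
statistical treatment rule based on data from a strictly strategy-proof RCT:
for `n ≥ κ⁻²`, `E[max_{[0,1]²} W - W(δ̂)] ≤ 2 e^{-1/2} M / (κ √n)`. -/
theorem stmt_18 {Ω : Type*} [MeasurableSpace Ω] [StandardBorelSpace Ω] [Nonempty Ω]
    (μ : Measure Ω) [IsProbabilityMeasure μ]
    (Y0 Y1 : Ω → ℝ) (hY0m : Measurable Y0) (hY1m : Measurable Y1)
    (M : ℝ) (hM : 0 < M)
    (hY0b : ∀ᵐ ω ∂μ, |Y0 ω| ≤ M) (hY1b : ∀ᵐ ω ∂μ, |Y1 ω| ≤ M)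
    (D T : Ω → Fin 2) (hD : Measurable D) (hT : Measurable T)
    (hCI : CondIndepFun (MeasurableSpace.comap T ⊤) hT.comap_le
      (fun ω => (Y0 ω, Y1 ω)) D μ)
    (Y : Ω → ℝ)
    (hY : ∀ ω, Y ω = Y1 ω * (if D ω = 1 then 1 else 0) + Y0 ω * (if D ω = 0 then 1 else 0))
    (hTpos : ∀ t, 0 < μ {ω | T ω = t})
    (p : Fin 2 → ℝ)
    (hp : ∀ t, p t = (μ {ω | D ω = 1 ∧ T ω = t}).toReal / (μ {ω | T ω = t}).toReal)
    (κ : ℝ) (hκ : κ ∈ Set.Ioo (0:ℝ) (1/2))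
    (hκp : ∀ t, κ ≤ p t ∧ p t ≤ 1 - κ)
    (β : Fin 2 → ℝ)
    (hβ : ∀ t, β t = ∫ ω, (Y1 ω - Y0 ω) * (if T ω = t then 1 else 0) ∂μ)
    (c : ℝ) (hc : c = ∫ ω, Y0 ω ∂μ)
    (W : ℝ → ℝ → ℝ)
    (hW : ∀ x y, W x y =
      if x > y then β 1 * x + β 0 * y + c
      else if x = y then (β 1 + β 0) * x + c
      else β 1 * y + β 0 * x + c)
    (n : ℕ) (hn : κ⁻¹ ^ 2 ≤ (n : ℝ))
    (βhat : Fin 2 → (Fin n → Ω) → ℝ)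
    (hβhat : ∀ t ω, βhat t ω = (1 / (n : ℝ)) * ∑ i : Fin n,
      (Y (ω i) * (if D (ω i) = 1 ∧ T (ω i) = t then 1 else 0) / p t
        - Y (ω i) * (if D (ω i) = 0 ∧ T (ω i) = t then 1 else 0) / (1 - p t)))
    (d : ℝ → ℝ → ℝ × ℝ)
    (hd : ∀ b₁ b₀, d b₁ b₀ =
      if b₁ > 0 ∧ b₀ < 0 then ((1:ℝ), (0:ℝ))
      else if (b₁ ≤ 0 ∨ b₀ ≥ 0) ∧ b₁ + b₀ > 0 then (1, 1)
      else (0, 0)) :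
    ∫ ω, (sSup {w : ℝ | ∃ x ∈ Set.Icc (0:ℝ) 1, ∃ y ∈ Set.Icc (0:ℝ) 1, W x y = w}
        - W (d (βhat 1 ω) (βhat 0 ω)).1 (d (βhat 1 ω) (βhat 0 ω)).2)
        ∂(Measure.pi fun _ : Fin n => μ)
      ≤ 2 * Real.exp (-(1/2)) * M / (κ * Real.sqrt n) := by
  obtain ⟨hκ0, hκ2⟩ := hκ
  have hn0 : 0 < n := by
    have : (0 : ℝ) < n := lt_of_lt_of_le (by positivity) hn
    exact_mod_cast this
  have hn' : (0 : ℝ) < n := by exact_mod_cast hn0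
  have hp0 (t) : 0 < p t := hκ0.trans_le (hκp t).1
  have hp1 (t) : 0 < 1 - p t := by linarith [(hκp t).2]
  have hY0i : Integrable Y0 μ := .of_bound hY0m.aestronglyMeasurable M hY0b
  have hY1i : Integrable Y1 μ := .of_bound hY1m.aestronglyMeasurable M hY1b
  -- the signed inverse-propensity-weighted outcome
  let V : Ω → ℝ := fun ω => if D ω = 1 then Y1 ω / p (T ω) else -(Y0 ω / (1 - p (T ω)))
  let Z : Fin 2 → Ω → ℝ := fun t ω =>
    Y ω * (if D ω = 1 ∧ T ω = t then 1 else 0) / p t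
      - Y ω * (if D ω = 0 ∧ T ω = t then 1 else 0) / (1 - p t)
  have hZV (t ω) : Z t ω = if T ω = t then V ω else 0 := by
    simp only [Z, V, hY]
    by_cases ht : T ω = t
    · obtain hd0 | hd1 : D ω = 0 ∨ D ω = 1 := by omega
      · simp [hd0, ht]
      · simp [hd1, ht]
    · simp [ht]
  have hVb : ∀ᵐ ω ∂μ, |V ω| ≤ M / κ := by
    filter_upwards [hY0b, hY1b] with ω h0 h1
    simp only [V]
    split_ifs
    · rw [abs_div, abs_of_pos (hp0 _)]
      exact div_le_div₀ hM.le h1 hκ0 (hκp _).1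
    · rw [abs_neg, abs_div, abs_of_pos (hp1 _)]
      exact div_le_div₀ hM.le h0 hκ0 (by linarith [(hκp (T ω)).2])
  have hZ (t ω) : Z t ω = Y1 ω * (if D ω = 1 ∧ T ω = t then 1 else 0) / p t
      - Y0 ω * (if D ω = 0 ∧ T ω = t then 1 else 0) / (1 - p t) := by
    simp only [Z, hY]
    obtain hd0 | hd1 : D ω = 0 ∨ D ω = 1 := by omega
    · simp [hd0]
    · simp [hd1]
  have hitem (j t : Fin 2) : Measurable fun ω => if D ω = j ∧ T ω = t then (1 : ℝ) else 0 :=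
    Measurable.ite ((hD (measurableSet_singleton j)).inter (hT (measurableSet_singleton t)))
      measurable_const measurable_const
  have hZm (t) : Measurable (Z t) := by
    rw [funext (hZ t)]
    exact ((hY1m.mul (hitem 1 t)).div_const _).sub ((hY0m.mul (hitem 0 t)).div_const _)
  have hZb (t) : ∀ᵐ ω ∂μ, |Z t ω| ≤ M / κ := by
    filter_upwards [hVb] with ω hω
    rw [hZV]
    split_ifs
    · exact hω
    · rw [abs_zero]; positivity
  have hZi (t) : Integrable (Z t) μ := .of_bound (hZm t).aestronglyMeasurable _ (hZb t)
  have hsum (ω) : Z 1 ω + Z 0 ω = V ω := by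
    rw [hZV, hZV]
    obtain ht | ht : T ω = 0 ∨ T ω = 1 := by omega
    · simp [ht]
    · simp [ht]
  have hmean (t) : ∫ ω, Z t ω ∂μ = β t := by
    have ht0 : μ (T ⁻¹' {t}) ≠ 0 := (hTpos t).ne'
    have : IsProbabilityMeasure μ[|T ⁻¹' {t}] := cond_isProbabilityMeasure ht0
    have hind := indepFun_cond_fiber_of_condIndepFun (hY0m.prodMk hY1m) hD hT hCI ht0
    have h1 := integral_mul_ite_and_fiber hD hT hY1m 1 t (hind.comp measurable_snd measurable_id)
    have h0 := integral_mul_ite_and_fiber hD hT hY0m 0 t (hind.comp measurable_fst measurable_id)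
    have hν1 : μ[|T ⁻¹' {t}].real (D ⁻¹' {1}) = p t := by
      rw [measureReal_def, cond_apply (hT (measurableSet_singleton t)), ENNReal.toReal_mul,
        ENNReal.toReal_inv, hp, div_eq_inv_mul, Set.inter_comm]
      rfl
    have hν0 : μ[|T ⁻¹' {t}].real (D ⁻¹' {0}) = 1 - p t := by
      have hcompl : D ⁻¹' {0} = (D ⁻¹' {1})ᶜ := by
        ext ω
        simp only [Set.mem_preimage, Set.mem_singleton_iff, Set.mem_compl_iff]
        omega
      rw [hcompl, probReal_compl_eq_one_sub (hD (measurableSet_singleton 1)), hν1]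
    have hbd (j : Fin 2) : ∀ᵐ ω ∂μ, ‖if D ω = j ∧ T ω = t then (1 : ℝ) else 0‖ ≤ 1 :=
      .of_forall fun ω => by split_ifs <;> simp
    have hbT : ∀ᵐ ω ∂μ, ‖if T ω = t then (1 : ℝ) else 0‖ ≤ 1 :=
      .of_forall fun ω => by split_ifs <;> simp
    have hiT : Measurable fun ω => if T ω = t then (1 : ℝ) else 0 :=
      Measurable.ite (hT (measurableSet_singleton t)) measurable_const measurable_const
    simp only [hZ, hβ, sub_mul]
    rw [integral_sub ((hY1i.mul_bdd (hitem 1 t).aestronglyMeasurable (hbd 1)).div_const _)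
        ((hY0i.mul_bdd (hitem 0 t).aestronglyMeasurable (hbd 0)).div_const _),
      integral_sub (hY1i.mul_bdd hiT.aestronglyMeasurable hbT)
        (hY0i.mul_bdd hiT.aestronglyMeasurable hbT),
      integral_div, integral_div, h1, h0, hν1, hν0,
      mul_div_cancel_left₀ _ (hp0 t).ne', mul_div_cancel_left₀ _ (hp1 t).ne']
  have hβhat' (t ω) : ∑ i, Z t (ω i) = n * βhat t ω := by
    rw [hβhat, ← mul_assoc, mul_one_div_cancel hn'.ne', one_mul]
  -- the gains of the three candidate rules `(0, 0)`, `(1, 0)`, `(1, 1)` over `(0, 0)`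
  let H : Fin 3 → Ω → ℝ := ![fun _ => 0, Z 1, fun ω => Z 1 ω + Z 0 ω]
  have hG0 : ∫ ω, H 0 ω ∂μ = 0 := by simp [H]
  have hG1 : ∫ ω, H 1 ω ∂μ = β 1 := hmean 1
  have hG2 : ∫ ω, H 2 ω ∂μ = β 1 + β 0 := by
    rw [← hmean 1, ← hmean 0]
    exact integral_add (hZi 1) (hZi 0)
  have hHm (j) : Measurable (H j) := by
    fin_cases j
    exacts [measurable_const, hZm 1, (hZm 1).add (hZm 0)]
  have hHi (j) : Integrable (H j) μ := by
    fin_cases j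
    exacts [integrable_zero _ _ _, hZi 1, (hZi 1).add (hZi 0)]
  have hHB (j k) : ∀ᵐ ω ∂μ, |H j ω - H k ω| ≤ M / κ := by
    have hB : 0 ≤ M / κ := by positivity
    filter_upwards [hVb, hZb 0, hZb 1] with ω hV h0 h1
    rw [← hsum] at hV
    rw [abs_le] at *
    fin_cases j <;> fin_cases k <;> simp [H, hB] <;> constructor <;> linarith
  let choice : ℝ → ℝ → Fin 3 := fun b₁ b₀ =>
    if b₁ > 0 ∧ b₀ < 0 then 1 else if (b₁ ≤ 0 ∨ b₀ ≥ 0) ∧ b₁ + b₀ > 0 then 2 else 0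
  have hWd (b₁ b₀) : W (d b₁ b₀).1 (d b₁ b₀).2 = (∫ ω, H (choice b₁ b₀) ω ∂μ) + c := by
    simp only [hd, choice]
    split_ifs
    · simp [hW, hG1]
    · simp [hW, hG2]
    · simp [hW, hG0]
  have hsel (ω : Fin n → Ω) (j : Fin 3) : ∑ i, H j (ω i)
      ≤ ∑ i, H (choice (βhat 1 ω) (βhat 0 ω)) (ω i) := by
    have e0 : ∑ i, H 0 (ω i) = n * 0 := by simp [H]
    have e1 : ∑ i, H 1 (ω i) = n * βhat 1 ω := hβhat' 1 ω
    have e2 : ∑ i, H 2 (ω i) = n * (βhat 1 ω + βhat 0 ω) := by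
      rw [mul_add, ← hβhat', ← hβhat', ← Finset.sum_add_distrib]
      rfl
    have key (k : Fin 3) : ∑ i, H k (ω i)
        = n * (![0, βhat 1 ω, βhat 1 ω + βhat 0 ω] : Fin 3 → ℝ) k := by
      fin_cases k
      exacts [e0, e1, e2]
    rw [key, key]
    refine mul_le_mul_of_nonneg_left ?_ hn'.le
    generalize βhat 1 ω = b₁
    generalize βhat 0 ω = b₀
    simp only [choice]
    split_ifs <;> fin_cases j <;> simp <;> grind
  obtain ⟨best, hbest⟩ := Finite.exists_max fun j => ∫ ω, H j ω ∂μ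
  have hsup : sSup {w : ℝ | ∃ x ∈ Set.Icc (0:ℝ) 1, ∃ y ∈ Set.Icc (0:ℝ) 1, W x y = w}
      = (∫ ω, H best ω ∂μ) + c := by
    refine IsGreatest.csSup_eq ⟨?_, ?_⟩
    · fin_cases best
      · exact ⟨0, by simp, 0, by simp, by simp [hW, hG0]⟩
      · exact ⟨1, by simp, 0, by simp, by simp [hW, hG1]⟩
      · exact ⟨1, by simp, 1, by simp, by simp [hW, hG2]⟩
    · have b0 := hbest 0
      have b1 := hbest 1
      have b2 := hbest 2
      simp only [hG0, hG1, hG2] at b0 b1 b2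
      rintro _ ⟨x, ⟨hx0, hx1⟩, y, ⟨hy0, hy1⟩, rfl⟩
      have convex {u v : ℝ} (hv : 0 ≤ v) (huv : v ≤ u) (hu : u ≤ 1) :
          β 1 * u + β 0 * v ≤ ∫ ω, H best ω ∂μ := by
        nlinarith [mul_le_mul_of_nonneg_left b0 (sub_nonneg.mpr hu),
          mul_le_mul_of_nonneg_left b1 (sub_nonneg.mpr huv), mul_le_mul_of_nonneg_left b2 hv]
      rw [hW]
      split_ifs with h1 h2
      · linarith [convex hy0 h1.le hx1]
      · linarith [convex hx0 le_rfl hx1]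
      · linarith [convex hx0 (not_lt.mp h1) hy1]
  have hmain := integral_empirical_argmax_regret_le hHm hHi (div_pos hM hκ0) hHB hn0 hsel hbest
  simp only [hsup, hWd, add_sub_add_right_eq_sub]
  refine hmain.trans_eq ?_
  rw [Fintype.card_fin]
  have hsq : 0 < Real.sqrt n := Real.sqrt_pos.mpr hn'
  push_cast
  field_simp
  norm_num
end

section
/- Let (Ω, μ) be a probability space, Y₀, Y₁ : Ω → ℝ measurable with |Y₀| ≤ M and |Y₁| ≤ M almost surely for some M > 0, T : Ω → {0,1} measurable, and Z : Ω → {0,1,2} measurable with Z independent of the triple (Y₀, Y₁, T) and κ ≤ μ(Z = z) ≤ 1 − κ for all z ∈ {0,1,2}, for some κ ∈ (0, 1/2). Define D := 1 if Z = 1, D := T if Z = 2, D := 0 if Z = 0, and Y := Y₁·1{D = 1} + Y₀·1{D = 0}. Set β_t := E[(Y₁ − Y₀)·1{T = t}] and c := E[Y₀], and define W : [0,1]² → ℝ by W(x,y) = β₁x + β₀y + c if x > y; W(x,y) = (β₁+β₀)x + c if x = y; W(x,y) = β₁y + β₀x + c if x < y. For a sample of size n, on the product space (Ωⁿ, μ^⊗n)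 define the estimators β̂₁ := (1/n)·Σ_{i=1}^n [ Y⁽ⁱ⁾·1{Z⁽ⁱ⁾ = 2}/μ(Z = 2) − Y⁽ⁱ⁾·1{Z⁽ⁱ⁾ = 0}/μ(Z = 0) ] and β̂₀ := (1/n)·Σ_{i=1}^n [ Y⁽ⁱ⁾·1{Z⁽ⁱ⁾ = 1}/μ(Z = 1) − Y⁽ⁱ⁾·1{Z⁽ⁱ⁾ = 2}/μ(Z = 2) ], where (Y⁽ⁱ⁾, Z⁽ⁱ⁾) are the i-th coordinate copies, and let δ̂ := d(β̂₁, β̂₀) where d(b₁, b₀) = (1,0) if b₁ > 0 and b₀ < 0; (1,1) if (b₁ ≤ 0 or b₀ ≥ 0) and b₁ + b₀ > 0; (0,0) otherwise. Then for n ≥ κ^{−2}: E_{μ^⊗n}[ max_{(x,y) ∈ [0,1]²} W(x,y) − W(δ̂) ] ≤ 2·e^{−1/2}·M/(κ·√n). -/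
open MeasureTheory ProbabilityTheory

lemma mul_exp_neg_sq_half_le (u : ℝ) : u * Real.exp (-u ^ 2 / 2) ≤ Real.exp (-(1 / 2)) := by
  have h : u ≤ Real.exp ((u ^ 2 - 1) / 2) := by
    nlinarith [Real.add_one_le_exp ((u ^ 2 - 1) / 2), sq_nonneg (u - 1)]
  calc u * Real.exp (-u ^ 2 / 2)
      ≤ Real.exp ((u ^ 2 - 1) / 2) * Real.exp (-u ^ 2 / 2) := by gcongr
    _ = Real.exp (-(1 / 2)) := by rw [← Real.exp_add]; ring_nf

/-- Hoeffding's inequality for the event that an i.i.d. sum of bounded variables with mean `-Δ ≤ 0`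
is nonnegative. -/
lemma measureReal_pi_sum_nonneg_le {Ω : Type*} [MeasurableSpace Ω] (μ : Measure Ω)
    [IsProbabilityMeasure μ] {X : Ω → ℝ} (hX : Measurable X) {B : ℝ}
    (hb : ∀ᵐ ω ∂μ, |X ω| ≤ B) {Δ : ℝ} (hΔ : 0 ≤ Δ) (hmean : ∫ ω, X ω ∂μ = -Δ) (n : ℕ) :
    (Measure.pi fun _ : Fin n => μ).real {ω | 0 ≤ ∑ i, X (ω i)}
      ≤ Real.exp (-(n * Δ) ^ 2 / (2 * (n * B ^ 2))) := by
  have hsub : HasSubgaussianMGF (fun ω => X ω - ∫ ω, X ω ∂μ) ((‖B - -B‖₊ / 2) ^ 2) μ :=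
    hasSubgaussianMGF_of_mem_Icc hX.aemeasurable
      (by filter_upwards [hb] with ω hω using abs_le.1 hω)
  have hindep : iIndepFun (fun (i : Fin n) (ω : Fin n → Ω) => X (ω i) - ∫ ω, X ω ∂μ)
      (Measure.pi fun _ : Fin n => μ) :=
    iIndepFun_pi (X := fun _ ω => X ω - ∫ ω, X ω ∂μ) fun _ => (hX.sub_const _).aemeasurable
  have hsub' (i : Fin n) : HasSubgaussianMGF (fun ω : Fin n → Ω => X (ω i) - ∫ ω, X ω ∂μ)
      ((‖B - -B‖₊ / 2) ^ 2) (Measure.pi fun _ : Fin n => μ) := by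
    refine HasSubgaussianMGF.of_map (X := fun ω => X ω - ∫ ω, X ω ∂μ)
      (Y := fun ω : Fin n → Ω => ω i) (measurable_pi_apply i).aemeasurable ?_
    rwa [(measurePreserving_eval (fun _ : Fin n => μ) i).map_eq]
  have h := HasSubgaussianMGF.measure_sum_ge_le_of_iIndepFun hindep (s := Finset.univ)
    (fun i _ => hsub' i) (ε := n * Δ) (by positivity)
  have hB : (|B + B| / 2) ^ 2 = B ^ 2 := by rw [div_pow, sq_abs]; ring
  simpa [hmean, Finset.sum_add_distrib, hB] using h

lemma mul_measureReal_pi_sum_nonneg_le {Ω : Type*} [MeasurableSpace Ω] (μ : Measure Ω)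
    [IsProbabilityMeasure μ] {X : Ω → ℝ} (hX : Measurable X) {B : ℝ} (hB : 0 < B)
    (hb : ∀ᵐ ω ∂μ, |X ω| ≤ B) {Δ : ℝ} (hΔ : 0 ≤ Δ) (hmean : ∫ ω, X ω ∂μ = -Δ)
    {n : ℕ} (hn : 0 < n) :
    Δ * (Measure.pi fun _ : Fin n => μ).real {ω | 0 ≤ ∑ i, X (ω i)}
      ≤ Real.exp (-(1 / 2)) * (B / √n) := by
  have hs : 0 < √(n : ℝ) := by positivity
  have hsq : √(n : ℝ) ^ 2 = n := Real.sq_sqrt (by positivity)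
  calc Δ * (Measure.pi fun _ : Fin n => μ).real {ω | 0 ≤ ∑ i, X (ω i)}
      ≤ Δ * Real.exp (-(n * Δ) ^ 2 / (2 * (n * B ^ 2))) := by
        gcongr; exact measureReal_pi_sum_nonneg_le μ hX hb hΔ hmean n
    _ = (√n * Δ / B) * Real.exp (-(√n * Δ / B) ^ 2 / 2) * (B / √n) := by
        have e : -(n * Δ) ^ 2 / (2 * (n * B ^ 2)) = -(√n * Δ / B) ^ 2 / 2 := by
          rw [div_pow, mul_pow √(n : ℝ), hsq]; field_simp
        rw [e]; field_simp
    _ ≤ Real.exp (-(1 / 2)) * (B / √n) := by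
        gcongr; exact mul_exp_neg_sq_half_le _

/-- Expected regret of selecting, among finitely many arms, one with the largest empirical mean. -/
lemma integral_regret_empirical_argmax_le {Ω ι : Type*} [MeasurableSpace Ω] [Fintype ι]
    [DecidableEq ι] (μ : Measure Ω) [IsProbabilityMeasure μ] {h : ι → Ω → ℝ}
    (hm : ∀ i, Measurable (h i)) (hint : ∀ i, Integrable (h i) μ) {B : ℝ} (hB : 0 < B)
    (hb : ∀ i j, i ≠ j → ∀ᵐ ω ∂μ, |h i ω - h j ω| ≤ B)
    {m : ι → ℝ} (hmean : ∀ i, ∫ ω, h i ω ∂μ = m i) {n : ℕ} (hn : 0 < n)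
    {S : (Fin n → Ω) → ι} (hS : ∀ ω j, ∑ i, h j (ω i) ≤ ∑ i, h (S ω) (ω i))
    {k : ι} (hk : ∀ j, m j ≤ m k) :
    ∫ ω, (m k - m (S ω)) ∂(Measure.pi fun _ : Fin n => μ)
      ≤ ((Finset.univ.erase k).card : ℝ) * (Real.exp (-(1 / 2)) * (B / √n)) := by
  set P := Measure.pi fun _ : Fin n => μ
  set A : ι → Set (Fin n → Ω) := fun j => {ω | 0 ≤ ∑ i, (h j (ω i) - h k (ω i))}
  have hA (j : ι) : MeasurableSet (A j) :=
    measurableSet_le measurable_const (Finset.measurable_fun_sum _ fun i _ =>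
      ((hm j).comp (measurable_pi_apply i)).sub ((hm k).comp (measurable_pi_apply i)))
  have hAint (j : ι) : Integrable ((A j).indicator fun _ => m k - m j) P :=
    (integrable_const _).indicator (hA j)
  calc ∫ ω, (m k - m (S ω)) ∂P
      ≤ ∫ ω, ∑ j ∈ Finset.univ.erase k, (A j).indicator (fun _ => m k - m j) ω ∂P := by
        refine integral_mono_of_nonneg (.of_forall fun ω => sub_nonneg.2 (hk _))
          (integrable_finsetSum _ fun j _ => hAint j) (.of_forall fun ω => ?_)
        have hnn (j : ι) : 0 ≤ (A j).indicator (fun _ => m k - m j) ω :=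
          Set.indicator_nonneg (fun _ _ => sub_nonneg.2 (hk j)) ω
        by_cases hSk : S ω = k
        · simpa [hSk] using Finset.sum_nonneg fun j _ => hnn j
        · have hmem : ω ∈ A (S ω) := by
            simpa [A, Finset.sum_sub_distrib] using hS ω k
          calc m k - m (S ω) = (A (S ω)).indicator (fun _ => m k - m (S ω)) ω := by
                rw [Set.indicator_of_mem hmem]
            _ ≤ _ := Finset.single_le_sum
                (f := fun j => (A j).indicator (fun _ => m k - m j) ω)
                (fun j _ => hnn j) (by simpa using hSk)
    _ = ∑ j ∈ Finset.univ.erase k, (m k - m j) * P.real (A j) := by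
        rw [integral_finsetSum _ fun j _ => hAint j]
        refine Finset.sum_congr rfl fun j _ => ?_
        rw [integral_indicator_const _ (hA j), smul_eq_mul, mul_comm]
    _ ≤ ∑ j ∈ Finset.univ.erase k, Real.exp (-(1 / 2)) * (B / √n) := by
        refine Finset.sum_le_sum fun j hj => ?_
        refine mul_measureReal_pi_sum_nonneg_le μ (X := fun ω => h j ω - h k ω)
          ((hm j).sub (hm k)) hB (hb j k (Finset.ne_of_mem_erase hj)) (sub_nonneg.2 (hk j)) ?_ hn
        rw [integral_sub (hint j) (hint k), hmean, hmean]; ring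
    _ = _ := by rw [Finset.sum_const, nsmul_eq_mul]

/-- Inverse probability weighting by an independent assignment is unbiased. -/
lemma integral_mul_ite_div_measure {Ω α γ : Type*} [MeasurableSpace Ω] [MeasurableSpace α]
    [MeasurableSpace γ] [MeasurableSingletonClass γ] [DecidableEq γ]
    (μ : Measure Ω) [IsProbabilityMeasure μ] {V : Ω → α} {Z : Ω → γ} (hV : Measurable V)
    (hZ : Measurable Z) (hindep : IndepFun V Z μ) {f : α → ℝ} (hf : Measurable f)
    {z : γ} (hz : (μ {ω | Z ω = z}).toReal ≠ 0) :
    ∫ ω, f (V ω) * (if Z ω = z then 1 else 0) / (μ {ω' | Z ω' = z}).toReal ∂μ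
      = ∫ ω, f (V ω) ∂μ := by
  have hg : Measurable fun c : γ => if c = z then (1 : ℝ) else 0 :=
    Measurable.ite (measurableSet_singleton z) measurable_const measurable_const
  have hi : ∫ ω, (if Z ω = z then (1 : ℝ) else 0) ∂μ = (μ {ω | Z ω = z}).toReal := by
    have hs : MeasurableSet {ω | Z ω = z} := hZ (measurableSet_singleton z)
    have := integral_indicator_one (μ := μ) hs
    simpa [Set.indicator_apply, Measure.real] using this
  have h := (hindep.comp hf hg).integral_fun_mul_eq_mul_integral
    (hf.comp hV).aestronglyMeasurable (hg.comp hZ).aestronglyMeasurable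
  simp only [Function.comp_def, hi] at h
  rw [integral_div, h, mul_div_cancel_right₀ _ hz]

/-- Proposition 3: Finite-sample maximum-regret bound for the
statistical treatment rule based on data from a doubly randomized preference
trial: for `n ≥ κ⁻²`, `E[max_{[0,1]²} W - W(δ̂)] ≤ 2 e^{-1/2} M / (κ √n)`. -/
theorem stmt_19 {Ω : Type*} [MeasurableSpace Ω] (μ : Measure Ω) [IsProbabilityMeasure μ]
    (Y0 Y1 : Ω → ℝ) (hY0m : Measurable Y0) (hY1m : Measurable Y1)
    (M : ℝ) (hM : 0 < M)
    (hY0b : ∀ᵐ ω ∂μ, |Y0 ω| ≤ M) (hY1b : ∀ᵐ ω ∂μ, |Y1 ω| ≤ M)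
    (T : Ω → Fin 2) (hT : Measurable T)
    (Z : Ω → Fin 3) (hZ : Measurable Z)
    (hindep : IndepFun (fun ω => (Y0 ω, Y1 ω, T ω)) Z μ)
    (κ : ℝ) (hκ : κ ∈ Set.Ioo (0:ℝ) (1/2))
    (hκZ : ∀ z, κ ≤ (μ {ω | Z ω = z}).toReal ∧ (μ {ω | Z ω = z}).toReal ≤ 1 - κ)
    (D : Ω → Fin 2)
    (hD : ∀ ω, D ω = if Z ω = 1 then 1 else if Z ω = 2 then T ω else 0)
    (Y : Ω → ℝ)
    (hY : ∀ ω, Y ω = Y1 ω * (if D ω = 1 then 1 else 0) + Y0 ω * (if D ω = 0 then 1 else 0))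
    (β : Fin 2 → ℝ)
    (hβ : ∀ t, β t = ∫ ω, (Y1 ω - Y0 ω) * (if T ω = t then 1 else 0) ∂μ)
    (c : ℝ) (hc : c = ∫ ω, Y0 ω ∂μ)
    (W : ℝ → ℝ → ℝ)
    (hW : ∀ x y, W x y =
      if x > y then β 1 * x + β 0 * y + c
      else if x = y then (β 1 + β 0) * x + c
      else β 1 * y + β 0 * x + c)
    (n : ℕ) (hn : κ⁻¹ ^ 2 ≤ (n : ℝ))
    (βhat : Fin 2 → (Fin n → Ω) → ℝ)
    (hβhat1 : ∀ ω, βhat 1 ω = (1 / (n : ℝ)) * ∑ i : Fin n,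
      (Y (ω i) * (if Z (ω i) = 2 then 1 else 0) / (μ {ω' | Z ω' = 2}).toReal
        - Y (ω i) * (if Z (ω i) = 0 then 1 else 0) / (μ {ω' | Z ω' = 0}).toReal))
    (hβhat0 : ∀ ω, βhat 0 ω = (1 / (n : ℝ)) * ∑ i : Fin n,
      (Y (ω i) * (if Z (ω i) = 1 then 1 else 0) / (μ {ω' | Z ω' = 1}).toReal
        - Y (ω i) * (if Z (ω i) = 2 then 1 else 0) / (μ {ω' | Z ω' = 2}).toReal))
    (d : ℝ → ℝ → ℝ × ℝ)
    (hd : ∀ b₁ b₀, d b₁ b₀ =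
      if b₁ > 0 ∧ b₀ < 0 then ((1:ℝ), (0:ℝ))
      else if (b₁ ≤ 0 ∨ b₀ ≥ 0) ∧ b₁ + b₀ > 0 then (1, 1)
      else (0, 0)) :
    ∫ ω, (sSup {w : ℝ | ∃ x ∈ Set.Icc (0:ℝ) 1, ∃ y ∈ Set.Icc (0:ℝ) 1, W x y = w}
        - W (d (βhat 1 ω) (βhat 0 ω)).1 (d (βhat 1 ω) (βhat 0 ω)).2)
        ∂(Measure.pi fun _ : Fin n => μ)
      ≤ 2 * Real.exp (-(1/2)) * M / (κ * Real.sqrt n) := by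
  have hp (z : Fin 3) : 0 < (μ {ω | Z ω = z}).toReal := hκ.1.trans_le (hκZ z).1
  have hn0 : 0 < n := by
    have : (0 : ℝ) < n := lt_of_lt_of_le (by have := hκ.1; positivity) hn
    exact_mod_cast this
  -- `f z` is the outcome that group `z` reveals, as a function of `(Y₀, Y₁, T)`.
  set f : Fin 3 → ℝ × ℝ × Fin 2 → ℝ :=
    ![fun v => v.1, fun v => v.2.1, fun v => if v.2.2 = 1 then v.2.1 else v.1] with hf_def
  set V : Ω → ℝ × ℝ × Fin 2 := fun ω => (Y0 ω, Y1 ω, T ω) with hV_def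
  have hV : Measurable V := by fun_prop
  have hf (z : Fin 3) : Measurable (f z) := by
    fin_cases z
    · exact measurable_fst
    · exact measurable_snd.fst
    · exact Measurable.ite (measurable_snd.snd (measurableSet_singleton 1))
        measurable_snd.fst measurable_fst
  have hYf (ω : Ω) : Y ω = f (Z ω) (V ω) := by
    rw [hY, hD]
    generalize hz : Z ω = z
    fin_cases z
    · simp [hf_def, hV_def]
    · simp [hf_def, hV_def]
    · rcases Fin.exists_fin_two.1 ⟨T ω, rfl⟩ with hT1 | hT1 <;> simp [hf_def, hV_def, hT1]
  have hfb : ∀ᵐ ω ∂μ, ∀ z, |f z (V ω)| ≤ M := by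
    filter_upwards [hY0b, hY1b] with ω h0 h1 z
    fin_cases z
    · exact h0
    · exact h1
    · simp only [hf_def, hV_def]
      change |if T ω = 1 then Y1 ω else Y0 ω| ≤ M
      split_ifs <;> assumption
  have hfint (z : Fin 3) : Integrable (fun ω => f z (V ω)) μ :=
    Integrable.of_bound ((hf z).comp hV).aestronglyMeasurable M
      (by filter_upwards [hfb] with ω h using h z)
  set h : Fin 3 → Ω → ℝ := fun z ω =>
    Y ω * (if Z ω = z then 1 else 0) / (μ {ω' | Z ω' = z}).toReal with hh_def
  have hhf (z : Fin 3) (ω : Ω) :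
      h z ω = f z (V ω) * (if Z ω = z then 1 else 0) / (μ {ω' | Z ω' = z}).toReal := by
    simp only [hh_def, hYf]
    split_ifs with hz
    · rw [hz]
    · simp
  have hhm (z : Fin 3) : Measurable (h z) := by
    rw [funext (hhf z)]
    exact (((hf z).comp hV).mul (Measurable.ite (hZ (measurableSet_singleton z))
      measurable_const measurable_const)).div_const _
  have hhb : ∀ᵐ ω ∂μ, ∀ z, |h z ω| ≤ if Z ω = z then M / κ else 0 := by
    filter_upwards [hfb] with ω hω z
    rw [hhf]
    split_ifs with hz
    · rw [mul_one, abs_div, abs_of_pos (hp z)]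
      exact div_le_div₀ hM.le (hω z) hκ.1 (hκZ z).1
    · simp
  have hB : 0 < M / κ := div_pos hM hκ.1
  have hhint (z : Fin 3) : Integrable (h z) μ := by
    refine Integrable.of_bound (hhm z).aestronglyMeasurable (M / κ) ?_
    filter_upwards [hhb] with ω hω
    refine (hω z).trans ?_
    split_ifs <;> linarith
  set m : Fin 3 → ℝ := fun z => ∫ ω, f z (V ω) ∂μ with hm_def
  have hhmean (z : Fin 3) : ∫ ω, h z ω ∂μ = m z := by
    simp_rw [hhf]
    exact integral_mul_ite_div_measure μ hV hZ hindep (hf z) (hp z).ne'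
  have hdiff (i j : Fin 3) (hij : i ≠ j) : ∀ᵐ ω ∂μ, |h i ω - h j ω| ≤ M / κ := by
    filter_upwards [hhb] with ω hω
    have h1 := hω i
    have h2 := hω j
    refine (abs_sub _ _).trans ?_
    split_ifs at h1 h2 with hi hj hj
    · exact absurd (hi.symm.trans hj) hij
    all_goals linarith
  have hc' : c = m 0 := hc
  have hβ1 : β 1 = m 2 - m 0 := by
    rw [hβ, hm_def, ← integral_sub (hfint 2) (hfint 0)]
    refine integral_congr_ae (.of_forall fun ω => ?_)
    change _ = (if T ω = 1 then Y1 ω else Y0 ω) - Y0 ω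
    by_cases hT1 : T ω = 1 <;> simp [hT1]
  have hβ0 : β 0 = m 1 - m 2 := by
    rw [hβ, hm_def, ← integral_sub (hfint 1) (hfint 2)]
    refine integral_congr_ae (.of_forall fun ω => ?_)
    change _ = Y1 ω - (if T ω = 1 then Y1 ω else Y0 ω)
    rcases Fin.exists_fin_two.1 ⟨T ω, rfl⟩ with hT1 | hT1 <;> simp [hT1]
  have hW00 : W 0 0 = m 0 := by rw [hW, hc']; simp
  have hW10 : W 1 0 = m 2 := by rw [hW, hc', hβ1]; simp
  have hW11 : W 1 1 = m 1 := by rw [hW, hc', hβ1, hβ0]; simp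
  obtain ⟨k, hk⟩ := Finite.exists_max m
  have hsup : sSup {w : ℝ | ∃ x ∈ Set.Icc (0:ℝ) 1, ∃ y ∈ Set.Icc (0:ℝ) 1, W x y = w} = m k := by
    refine IsGreatest.csSup_eq ⟨?_, ?_⟩
    · fin_cases k
      · exact ⟨0, by simp, 0, by simp, hW00⟩
      · exact ⟨1, by simp, 1, by simp, hW11⟩
      · exact ⟨1, by simp, 0, by simp, hW10⟩
    · have key {x y : ℝ} (hx : x ≤ 1) (hy : 0 ≤ y) (hxy : y ≤ x) :
          β 1 * x + β 0 * y + c ≤ m k := by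
        rw [hβ1, hβ0, hc']
        nlinarith [mul_le_mul_of_nonneg_left (hk 0) (sub_nonneg.2 hx),
          mul_le_mul_of_nonneg_left (hk 1) hy,
          mul_le_mul_of_nonneg_left (hk 2) (sub_nonneg.2 hxy)]
      rintro w ⟨x, hx, y, hy, rfl⟩
      rw [hW]
      split_ifs with h1 h2
      · exact key hx.2 hy.1 h1.le
      · have := key hx.2 hx.1 le_rfl
        linarith
      · exact key hy.2 hx.1 (not_lt.1 h1)
  set H : Fin 3 → (Fin n → Ω) → ℝ := fun z ω => ∑ i, h z (ω i) with hH_def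
  have hn1 : (0 : ℝ) < 1 / n := by positivity
  have hb1 (ω : Fin n → Ω) : βhat 1 ω = 1 / (n : ℝ) * (H 2 ω - H 0 ω) := by
    rw [hβhat1, hH_def, ← Finset.sum_sub_distrib]
  have hb0 (ω : Fin n → Ω) : βhat 0 ω = 1 / (n : ℝ) * (H 1 ω - H 2 ω) := by
    rw [hβhat0, hH_def, ← Finset.sum_sub_distrib]
  have hsel (ω : Fin n → Ω) : ∃ s : Fin 3, (∀ j, H j ω ≤ H s ω) ∧
      W (d (βhat 1 ω) (βhat 0 ω)).1 (d (βhat 1 ω) (βhat 0 ω)).2 = m s := by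
    have e1 : 0 < βhat 1 ω ↔ H 0 ω < H 2 ω := by
      rw [hb1, mul_pos_iff_of_pos_left hn1, sub_pos]
    have e0 : βhat 0 ω < 0 ↔ H 1 ω < H 2 ω := by
      rw [hb0, ← neg_pos, ← mul_neg, mul_pos_iff_of_pos_left hn1, neg_sub, sub_pos]
    have e2 : 0 < βhat 1 ω + βhat 0 ω ↔ H 0 ω < H 1 ω := by
      rw [hb1, hb0, ← mul_add, mul_pos_iff_of_pos_left hn1, add_comm, sub_add_sub_cancel,
        sub_pos]
    rw [hd]
    have e1' : βhat 1 ω ≤ 0 ↔ H 2 ω ≤ H 0 ω := le_iff_le_iff_lt_iff_lt.2 e1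
    have e0' : 0 ≤ βhat 0 ω ↔ H 2 ω ≤ H 1 ω := le_iff_le_iff_lt_iff_lt.2 e0
    simp only [gt_iff_lt, ge_iff_le, e1, e0, e2, e1', e0']
    split_ifs with c1 c2
    · refine ⟨2, fun j => ?_, hW10⟩
      fin_cases j
      exacts [c1.1.le, c1.2.le, le_rfl]
    · refine ⟨1, fun j => ?_, hW11⟩
      fin_cases j
      · exact c2.2.le
      · exact le_rfl
      · rcases c2.1 with h' | h'
        exacts [h'.trans c2.2.le, h']
    · rw [not_and_or, not_lt, not_lt] at c1
      have h10 : H 1 ω ≤ H 0 ω := by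
        by_contra! h'
        exact c2 ⟨c1, h'⟩
      refine ⟨0, fun j => ?_, hW00⟩
      fin_cases j
      · exact le_rfl
      · exact h10
      · rcases c1 with h' | h'
        exacts [h', h'.trans h10]
  choose S hS hWS using hsel
  simp_rw [hsup, hWS]
  refine (integral_regret_empirical_argmax_le μ hhm hhint hB hdiff hhmean hn0 hS hk).trans_eq ?_
  rw [Finset.card_erase_of_mem (Finset.mem_univ k), Finset.card_univ, Fintype.card_fin]
  push_cast
  rw [div_div]
  ring
end
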